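/- For every integer n ≥ 1, ρ_n = (24/π²)·( n!·(−1)^{n+1}·b_{n+1}/2^{n+1} + 2·(−log 2)^{n+2}/((n+2)·(n+1)) ). -/

import Mathlib

open MeasureTheory

/-- The limiting density of the logarithm of smallest denominators. -/
noncomputable def etaLog (s : ℝ) : ℝ :=
  if s ≤ 0 then 6 / Real.pi ^ 2 * Real.exp (2 * s)
  else if s ≤ Real.log 2 then 6 / Real.pi ^ 2 * (-Real.exp (2 * s) + 2 + 4 * s)
  else 6 / Real.pi ^ 2 * (-Real.exp (2 * s) + 2
    + 2 * Real.exp (2 * s) * Real.sqrt (1 / 4 - Real.exp (-2 * s))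
    - 4 * Real.log (1 / 2 + Real.sqrt (1 / 4 - Real.exp (-2 * s))))

/-- Euler beta function B(z, 1/2). -/
noncomputable def betaHalf (z : ℝ) : ℝ :=
  Real.Gamma z * Real.Gamma (1 / 2) / Real.Gamma (z + 1 / 2)

/-- B(z,1/2) minus its pole 1/z, extended by its limit 2 log 2 at z = 0. -/
noncomputable def f (z : ℝ) : ℝ :=
  if z = 0 then 2 * Real.log 2 else betaHalf z - 1 / z

/-- The Laurent coefficients of B(z,1/2) at z = 0 (for nonnegative indices). -/
noncomputable def b (n : ℕ) : ℝ := (1 / (n.factorial : ℝ)) * iteratedDeriv n f 0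


open Set Filter Topology

noncomputable def rr (x : ℝ) : ℝ := √(1 - Real.exp (-2 * x))

noncomputable def KK (x : ℝ) : ℝ := 1 / rr x - 1

lemma rr_zero : rr 0 = 0 := by simp [rr]

lemma rr_nonneg (x : ℝ) : 0 ≤ rr x := Real.sqrt_nonneg _

lemma exp_lt_one_aux {x : ℝ} (hx : 0 < x) : Real.exp (-2 * x) < 1 := by
  rw [Real.exp_lt_one_iff]; linarith

lemma rr_pos {x : ℝ} (hx : 0 < x) : 0 < rr x :=
  Real.sqrt_pos.2 (by linarith [exp_lt_one_aux hx])

lemma rr_le_one (x : ℝ) : rr x ≤ 1 := by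
  rw [rr, Real.sqrt_le_one]
  linarith [Real.exp_pos (-2 * x)]

lemma rr_sq {x : ℝ} (hx : 0 ≤ x) : rr x ^ 2 = 1 - Real.exp (-2 * x) := by
  apply Real.sq_sqrt
  have : Real.exp (-2 * x) ≤ 1 := by rw [Real.exp_le_one_iff]; linarith
  linarith

lemma one_sub_rr_le {x : ℝ} (hx : 0 ≤ x) : 1 - rr x ≤ Real.exp (-2 * x) := by
  have h1 := rr_sq hx
  have h2 := rr_nonneg x
  have h3 := rr_le_one x
  nlinarith

lemma continuous_rr : Continuous rr := by unfold rr; fun_prop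

lemma hasDerivAt_rr {x : ℝ} (hx : 0 < x) :
    HasDerivAt rr (Real.exp (-2 * x) / rr x) x := by
  have h1 : HasDerivAt (fun x : ℝ => 1 - Real.exp (-2 * x)) (2 * Real.exp (-2 * x)) x := by
    have := (((hasDerivAt_id x).const_mul (-2)).exp).const_sub 1
    refine this.congr_deriv ?_
    simp; ring
  have h2 := h1.sqrt (by linarith [exp_lt_one_aux hx])
  refine h2.congr_deriv ?_
  change 2 * Real.exp (-2 * x) / (2 * rr x) = _
  have := (rr_pos hx).ne'
  field_simp

lemma KK_eq {x : ℝ} (hx : 0 < x) : KK x = (1 - rr x) / rr x := by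
  have := (rr_pos hx).ne'
  unfold KK; field_simp

lemma KK_nonneg {x : ℝ} (hx : 0 < x) : 0 ≤ KK x := by
  rw [KK_eq hx]
  exact div_nonneg (by linarith [rr_le_one x]) (rr_nonneg x)

lemma KK_le {x : ℝ} (hx : 0 < x) : KK x ≤ Real.exp (-2 * x) / rr x := by
  rw [KK_eq hx]
  exact div_le_div_of_nonneg_right (one_sub_rr_le hx.le) (rr_nonneg x)

lemma measurable_KK : Measurable KK := by
  unfold KK
  exact (measurable_const.div continuous_rr.measurable).sub measurable_const

lemma tendsto_exp_neg_mul {a : ℝ} (ha : 0 < a) :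
    Tendsto (fun x : ℝ => Real.exp (-a * x)) atTop (𝓝 0) := by
  apply Real.tendsto_exp_atBot.comp
  exact tendsto_id.const_mul_atTop_of_neg (by linarith)

lemma integrableOn_exp_div_rr : IntegrableOn (fun x => Real.exp (-x) / rr x) (Ioi 0) := by
  apply integrableOn_Ioi_deriv_of_nonneg (g := fun x => - Real.arcsin (Real.exp (-x))) (l := 0)
  · apply Continuous.continuousWithinAt
    exact (Real.continuous_arcsin.comp (by fun_prop)).neg
  · intro x hx
    have hx : 0 < x := hx
    have h0 := Real.exp_pos (-x)
    have h1 : Real.exp (-x) < 1 := by rw [Real.exp_lt_one_iff]; linarith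
    have h2 : HasDerivAt (fun x : ℝ => Real.exp (-x)) (-Real.exp (-x)) x := by
      simpa using (hasDerivAt_id x).neg.exp
    have h3 := ((Real.hasDerivAt_arcsin (by linarith) h1.ne).comp x h2).neg
    refine h3.congr_deriv ?_
    have : Real.exp (-2 * x) = Real.exp (-x) ^ 2 := by
      rw [← Real.exp_nat_mul]; congr 1; push_cast; ring
    rw [rr, this]; ring
  · intro x hx
    exact div_nonneg (Real.exp_pos _).le (rr_nonneg x)
  · have h : Tendsto (fun x : ℝ => Real.exp (-x)) atTop (𝓝 0) := Real.tendsto_exp_neg_atTop_nhds_zero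
    have := ((Real.continuous_arcsin.tendsto 0).comp h).neg
    simpa using this

lemma integrableOn_exp_div_rr' {z : ℝ} (hz : |z| ≤ 1 / 2) :
    IntegrableOn (fun x => Real.exp (-2 * (z + 1) * x) / rr x) (Ioi 0) := by
  apply Integrable.mono' integrableOn_exp_div_rr
  · apply Measurable.aestronglyMeasurable
    exact Measurable.div (by fun_prop) continuous_rr.measurable
  · filter_upwards [ae_restrict_mem measurableSet_Ioi] with x hx
    have hx : 0 < x := hx
    rw [Real.norm_of_nonneg (div_nonneg (Real.exp_pos _).le (rr_nonneg x))]
    apply div_le_div_of_nonneg_right _ (rr_nonneg x)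
    apply Real.exp_le_exp.2
    have := (abs_le.1 hz).1
    nlinarith

lemma integrableOn_exp_mul_KK {z : ℝ} (hz : |z| ≤ 1 / 2) :
    IntegrableOn (fun x => Real.exp (-2 * z * x) * KK x) (Ioi 0) := by
  apply Integrable.mono' (integrableOn_exp_div_rr' hz)
  · apply Measurable.aestronglyMeasurable
    exact Measurable.mul (by fun_prop) measurable_KK
  · filter_upwards [ae_restrict_mem measurableSet_Ioi] with x hx
    have hx : 0 < x := hx
    rw [Real.norm_of_nonneg (mul_nonneg (Real.exp_pos _).le (KK_nonneg hx))]
    calc _ ≤ Real.exp (-2 * z * x) * (Real.exp (-2 * x) / rr x) := by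
          gcongr; exact KK_le hx
      _ = _ := by rw [← mul_div_assoc, ← Real.exp_add]; congr 2; ring

lemma integrableOn_pow_mul_KK (m : ℕ) :
    IntegrableOn (fun x => x ^ m * KK x) (Ioi 0) := by
  apply Integrable.mono' ((integrableOn_exp_mul_KK (z := -1/2) (by norm_num [abs_le])).const_mul (m.factorial : ℝ))
  · apply Measurable.aestronglyMeasurable
    exact Measurable.mul (by fun_prop) measurable_KK
  · filter_upwards [ae_restrict_mem measurableSet_Ioi] with x hx
    have hx : 0 < x := hx
    have h0 := KK_nonneg hx
    rw [Real.norm_of_nonneg (by positivity), ← mul_assoc]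
    gcongr
    have := Real.pow_div_factorial_le_exp x hx.le m
    rw [div_le_iff₀ (by positivity)] at this
    rw [mul_comm]
    convert this using 3; ring

/-- integration by parts for the beta integral -/
lemma parts_beta {z : ℝ} (hz : |z| ≤ 1 / 2) :
    (2 * z + 1) * ∫ x in Ioi (0:ℝ), Real.exp (-2 * (z + 1) * x) / rr x =
      1 + 2 * z * ∫ x in Ioi (0:ℝ), Real.exp (-2 * z * x) * KK x := by
  have hA := (integrableOn_exp_div_rr' hz).const_mul (2 * z + 1)
  have hB := (integrableOn_exp_mul_KK hz).const_mul (2 * z)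
  have key := integral_Ioi_of_hasDerivAt_of_tendsto (a := 0) (m := 0)
    (f := fun x => Real.exp (-2 * z * x) * (rr x - 1))
    (f' := fun x => (2 * z + 1) * (Real.exp (-2 * (z + 1) * x) / rr x)
      - 2 * z * (Real.exp (-2 * z * x) * KK x)) ?_ ?_ (hA.sub hB) ?_
  · rw [integral_sub hA hB, integral_const_mul, integral_const_mul] at key
    simp only [rr_zero, mul_zero, Real.exp_zero] at key
    linarith
  · apply Continuous.continuousWithinAt
    have := continuous_rr
    fun_prop
  · intro x hx
    have hx : 0 < x := hx
    have h1 : HasDerivAt (fun x : ℝ => Real.exp (-2 * z * x)) (-2 * z * Real.exp (-2 * z * x)) x := by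
      have := ((hasDerivAt_id x).const_mul (-2 * z)).exp
      refine this.congr_deriv ?_
      simp; ring
    refine (h1.mul ((hasDerivAt_rr hx).sub_const 1)).congr_deriv ?_
    have e1 : Real.exp (-2 * (z + 1) * x) = Real.exp (-2 * z * x) * Real.exp (-2 * x) := by
      rw [← Real.exp_add]; congr 1; ring
    have e2 : Real.exp (-2 * x) = 1 - rr x ^ 2 := by rw [rr_sq hx.le]; ring
    have := (rr_pos hx).ne'
    rw [e1, e2, KK_eq hx]
    field_simp
    ring
  · have h0 := tendsto_exp_neg_mul (a := 1) one_pos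
    apply squeeze_zero_norm' _ h0
    filter_upwards [eventually_gt_atTop 0] with x hx
    rw [norm_mul, Real.norm_of_nonneg (Real.exp_pos _).le, Real.norm_eq_abs, abs_sub_comm,
      abs_of_nonneg (by linarith [rr_le_one x])]
    calc _ ≤ Real.exp (-2 * z * x) * Real.exp (-2 * x) := by
          gcongr; exact one_sub_rr_le hx.le
      _ = Real.exp (-2 * (z + 1) * x) := by rw [← Real.exp_add]; congr 1; ring
      _ ≤ _ := by
        apply Real.exp_le_exp.2
        have := (abs_le.1 hz).1
        nlinarith

lemma beta_subst {z : ℝ} (hz : |z| ≤ 1 / 2) :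
    2 * ∫ x in Ioi (0:ℝ), Real.exp (-2 * (z + 1) * x) / rr x = betaHalf (z + 1) := by
  have hz' := abs_le.1 hz
  have h1 : betaHalf (z + 1) = (Complex.betaIntegral (z + 1 : ℝ) (1 / 2 : ℝ)).re :=
    ProbabilityTheory.beta_eq_betaIntegralReal _ _ (by linarith) (by norm_num)
  have h2 : Complex.betaIntegral (z + 1 : ℝ) (1 / 2 : ℝ) =
      ((∫ t in Ioo (0:ℝ) 1, t ^ z * (√(1 - t))⁻¹ : ℝ) : ℂ) := by
    rw [Complex.betaIntegral, intervalIntegral.integral_of_le zero_le_one, integral_Ioc_eq_integral_Ioo,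
      ← integral_complex_ofReal]
    apply setIntegral_congr_fun measurableSet_Ioo
    intro t ht
    have h1t : 0 < 1 - t := by linarith [ht.2]
    simp only
    rw [Real.sqrt_eq_rpow, ← Real.rpow_neg h1t.le]
    push_cast
    rw [Complex.ofReal_cpow ht.1.le, Complex.ofReal_cpow h1t.le]
    congr 2 <;> push_cast <;> ring
  have himg : (fun x : ℝ => Real.exp (-2 * x)) '' Ioi 0 = Ioo 0 1 := by
    ext t
    constructor
    · rintro ⟨x, hx, rfl⟩
      exact ⟨Real.exp_pos _, exp_lt_one_aux hx⟩
    · rintro ⟨h0, h1⟩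
      refine ⟨-(1/2) * Real.log t, ?_, ?_⟩
      · have := Real.log_neg h0 h1
        simp only [mem_Ioi]; linarith
      · simp only
        rw [show -2 * (-(1/2) * Real.log t) = Real.log t by ring, Real.exp_log h0]
  rw [h1, h2, Complex.ofReal_re, ← himg,
    integral_image_eq_integral_abs_deriv_smul (f' := fun x => -2 * Real.exp (-2 * x)) measurableSet_Ioi,
    ← integral_const_mul]
  · apply setIntegral_congr_fun measurableSet_Ioi
    intro x hx
    simp only [smul_eq_mul]
    rw [← Real.exp_mul, abs_of_nonpos (by linarith [Real.exp_pos (-2 * x)]), rr,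
      show -2 * (z + 1) * x = -2 * x + -2 * x * z by ring, Real.exp_add]
    ring
  · intro x hx
    apply HasDerivAt.hasDerivWithinAt
    have := ((hasDerivAt_id x).const_mul (-2)).exp
    refine this.congr_deriv ?_
    simp; ring
  · intro x _ y _ h
    have := Real.exp_injective h
    linarith

noncomputable def hh (x : ℝ) : ℝ := - Real.log ((1 + rr x) / 2)

lemma continuous_hh : Continuous hh := by
  unfold hh
  apply Continuous.neg
  apply Continuous.log
  · have := continuous_rr
    fun_prop
  · intro x
    have := rr_nonneg x
    positivity

lemma hh_zero : hh 0 = Real.log 2 := by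
  simp [hh, rr_zero]

lemma hasDerivAt_hh {x : ℝ} (hx : 0 < x) : HasDerivAt hh (- KK x) x := by
  have hr := rr_pos hx
  have h := ((((hasDerivAt_rr hx).const_add 1).div_const 2).log (by positivity)).neg
  refine h.congr_deriv ?_
  have e2 : Real.exp (-2 * x) = 1 - rr x ^ 2 := by rw [rr_sq hx.le]; ring
  rw [KK_eq hx, e2]
  field_simp
  ring

lemma hh_nonneg (x : ℝ) : 0 ≤ hh x := by
  have h0 := rr_nonneg x
  have h1 := rr_le_one x
  have : Real.log ((1 + rr x) / 2) ≤ 0 := Real.log_nonpos (by linarith) (by linarith)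
  unfold hh; linarith

lemma hh_le {x : ℝ} (hx : 0 ≤ x) : hh x ≤ Real.exp (-2 * x) := by
  have h0 := rr_nonneg x
  have h1 := one_sub_rr_le hx
  have h2 := rr_le_one x
  have := Real.one_sub_inv_le_log_of_pos (x := (1 + rr x) / 2) (by positivity)
  have h3 : ((1 + rr x) / 2)⁻¹ ≤ 1 + (1 - rr x) := by
    rw [inv_le_iff_one_le_mul₀ (by positivity)]
    nlinarith
  unfold hh
  linarith

lemma tendsto_pow_mul_exp (m : ℕ) :
    Tendsto (fun x : ℝ => x ^ m * Real.exp (-2 * x)) atTop (𝓝 0) := by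
  have h1 := Real.tendsto_pow_mul_exp_neg_atTop_nhds_zero m
  apply squeeze_zero' _ _ h1
  · filter_upwards [eventually_gt_atTop 0] with x hx
    positivity
  · filter_upwards [eventually_gt_atTop 0] with x hx
    gcongr
    linarith

lemma tendsto_pow_mul_hh (m : ℕ) : Tendsto (fun x => x ^ m * hh x) atTop (𝓝 0) := by
  apply squeeze_zero' _ _ (tendsto_pow_mul_exp m)
  · filter_upwards [eventually_gt_atTop 0] with x hx
    have := hh_nonneg x
    positivity
  · filter_upwards [eventually_gt_atTop 0] with x hx
    gcongr
    exact hh_le hx.le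

lemma integral_KK : ∫ x in Ioi (0:ℝ), KK x = Real.log 2 := by
  have h := integrableOn_pow_mul_KK 0
  simp only [pow_zero, one_mul] at h
  have key := integral_Ioi_of_hasDerivAt_of_tendsto (a := 0) (m := 0) (f := hh)
    continuous_hh.continuousWithinAt (fun x hx => hasDerivAt_hh hx) h.neg
    (by simpa using tendsto_pow_mul_hh 0)
  rw [integral_neg, hh_zero] at key
  linarith

lemma f_eq {z : ℝ} (hz : |z| < 1 / 2) :
    f z = 2 * ∫ x in Ioi (0:ℝ), Real.exp (-2 * z * x) * KK x := by
  unfold f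
  split_ifs with h0
  · subst h0
    simp [integral_KK]
  · have h1 := parts_beta hz.le
    have h2 := beta_subst hz.le
    have hz' := abs_lt.1 hz
    have h3 : betaHalf z * z = (z + 1 / 2) * betaHalf (z + 1) := by
      unfold betaHalf
      have e : z + 1 + 1 / 2 = (z + 1 / 2) + 1 := by ring
      rw [e, Real.Gamma_add_one h0, Real.Gamma_add_one (by linarith : z + 1 / 2 ≠ 0)]
      have : Real.Gamma (z + 1 / 2) ≠ 0 := (Real.Gamma_pos_of_pos (by linarith)).ne'
      have : z + 1 / 2 ≠ 0 := by linarith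
      generalize Real.Gamma (z + 1 / 2) = g at *
      generalize z + 1 / 2 = y at *
      field_simp
    have h4 : betaHalf z = (z + 1 / 2) * betaHalf (z + 1) / z := by
      rw [← h3]; field_simp
    rw [h4, ← h2]
    generalize (∫ x in Ioi (0:ℝ), Real.exp (-2 * (z + 1) * x) / rr x) = A at *
    generalize (∫ x in Ioi (0:ℝ), Real.exp (-2 * z * x) * KK x) = B at *
    field_simp
    linarith


lemma b_eq (m : ℕ) :
    b m = 1 / (m.factorial : ℝ) * (2 * (-2) ^ m * ∫ x in Ioi (0:ℝ), x ^ m * KK x) := by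
  have hmeas : Measurable (fun x => (2 * KK x).toNNReal) :=
    (measurable_KK.const_mul 2).real_toNNReal
  set μ : Measure ℝ := (volume.restrict (Ioi (0:ℝ))).withDensity
    (fun x => ((2 * KK x).toNNReal : ENNReal)) with hμ
  have hK : ∀ x ∈ Ioi (0:ℝ), ((2 * KK x).toNNReal : ℝ) = 2 * KK x := fun x hx =>
    Real.coe_toNNReal _ (by linarith [KK_nonneg hx])
  have hint : ∀ g : ℝ → ℝ, ∫ x, g x ∂μ = ∫ x in Ioi (0:ℝ), 2 * (g x * KK x) := by
    intro g
    rw [hμ, integral_withDensity_eq_integral_smul hmeas]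
    apply setIntegral_congr_fun measurableSet_Ioi
    intro x hx
    simp only [NNReal.smul_def, hK x hx, smul_eq_mul]
    ring
  have hmgf : ∀ z, |z| < 1 / 2 → f z = ProbabilityTheory.mgf (fun x => -2 * x) μ z := by
    intro z hz
    rw [f_eq hz, ProbabilityTheory.mgf, hint, integral_const_mul]
    congr 2
    ext x
    congr 2
    ring
  have hset : ∀ z, |z| < 1 / 2 → z ∈ ProbabilityTheory.integrableExpSet (fun x => -2 * x) μ := by
    intro z hz
    change Integrable _ μ
    rw [hμ, integrable_withDensity_iff_integrable_smul hmeas]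
    refine ((integrableOn_exp_mul_KK hz.le).const_mul 2).congr ?_
    filter_upwards [ae_restrict_mem measurableSet_Ioi] with x hx
    simp only [NNReal.smul_def, hK x hx, smul_eq_mul]
    rw [show -2 * z * x = z * (-2 * x) by ring]
    ring
  have hnb : ∀ᶠ z : ℝ in 𝓝 0, |z| < 1 / 2 := by
    have : Tendsto (fun z : ℝ => |z|) (𝓝 0) (𝓝 0) := by
      simpa using (continuous_abs (G := ℝ)).tendsto 0
    exact this.eventually_lt_const (by norm_num)
  have h0 : (0:ℝ) ∈ interior (ProbabilityTheory.integrableExpSet (fun x => -2 * x) μ) :=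
    mem_interior_iff_mem_nhds.2 (hnb.mono hset)
  have hev : f =ᶠ[𝓝 0] ProbabilityTheory.mgf (fun x => -2 * x) μ := hnb.mono hmgf
  rw [b, hev.iteratedDeriv_eq m, ProbabilityTheory.iteratedDeriv_mgf_zero h0, hint]
  congr 1
  rw [← integral_const_mul]
  refine integral_congr_ae (ae_of_all _ fun x => ?_)
  simp only [Pi.pow_apply, mul_pow]
  ring

lemma integrableOn_pow_mul_exp (k : ℕ) :
    IntegrableOn (fun x : ℝ => x ^ k * Real.exp (-2 * x)) (Ioi 0) := by
  apply Integrable.mono' ((integrableOn_exp_neg_Ioi 0).const_mul (k.factorial : ℝ))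
  · exact (by fun_prop : Continuous fun x : ℝ => x ^ k * Real.exp (-2 * x)).aestronglyMeasurable
  · filter_upwards [ae_restrict_mem measurableSet_Ioi] with x hx
    have hx : 0 < x := hx
    rw [Real.norm_of_nonneg (by positivity)]
    have := Real.pow_div_factorial_le_exp x hx.le k
    rw [div_le_iff₀ (by positivity)] at this
    calc _ ≤ (Real.exp x * k.factorial) * Real.exp (-2 * x) := by gcongr
      _ = k.factorial * (Real.exp x * Real.exp (-2 * x)) := by ring
      _ = _ := by rw [← Real.exp_add]; congr 2; ring

lemma integrableOn_pow_mul_exp_Iic (k : ℕ) {a : ℝ} (ha : a ≤ 0) :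
    IntegrableOn (fun x : ℝ => x ^ k * Real.exp (2 * x)) (Iic a) := by
  have h1 : IntegrableOn (fun x : ℝ => x ^ k * Real.exp (-2 * x)) (Ici (-0)) := by
    rw [neg_zero, integrableOn_Ici_iff_integrableOn_Ioi]
    exact integrableOn_pow_mul_exp k
  have h2 := (h1.comp_neg_Iic).const_mul ((-1) ^ k)
  refine IntegrableOn.mono_set (h2.congr (ae_of_all _ fun x => ?_)) (Iic_subset_Iic.2 ha)
  simp only
  rw [neg_pow x k, ← mul_assoc, ← mul_assoc, ← mul_pow]
  simp

lemma piece_one (m : ℕ) :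
    IntegrableOn (fun x : ℝ => (2 * x ^ (m + 1) + ((m : ℝ) + 1) * x ^ m) * (4 * Real.exp (2 * x)))
      (Iic (-Real.log 2)) ∧
    ∫ x in Iic (-Real.log 2), (2 * x ^ (m + 1) + ((m : ℝ) + 1) * x ^ m) * (4 * Real.exp (2 * x))
      = (-Real.log 2) ^ (m + 1) := by
  have hL := Real.log_pos one_lt_two
  have hi : IntegrableOn (fun x : ℝ => (2 * x ^ (m + 1) + ((m : ℝ) + 1) * x ^ m)
      * (4 * Real.exp (2 * x))) (Iic (-Real.log 2)) := by
    have h1 := (integrableOn_pow_mul_exp_Iic (m + 1) (a := -Real.log 2) (by linarith)).const_mul 8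
    have h2 := (integrableOn_pow_mul_exp_Iic m (a := -Real.log 2) (by linarith)).const_mul
      (4 * ((m : ℝ) + 1))
    refine (h1.add h2).congr (ae_of_all _ fun x => ?_)
    simp only [Pi.add_apply]
    ring
  refine ⟨hi, ?_⟩
  have key := integral_Iic_of_hasDerivAt_of_tendsto' (a := -Real.log 2) (m := 0)
    (f := fun x => x ^ (m + 1) * (4 * Real.exp (2 * x))) ?_ hi ?_
  · rw [key]
    have : Real.exp (2 * -Real.log 2) = 1 / 4 := by
      rw [show 2 * -Real.log 2 = -(Real.log 2 + Real.log 2) by ring, Real.exp_neg, Real.exp_add,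
        Real.exp_log two_pos]
      norm_num
    rw [this]; ring
  · intro x _
    have h1 : HasDerivAt (fun x : ℝ => Real.exp (2 * x)) (2 * Real.exp (2 * x)) x := by
      have := ((hasDerivAt_id x).const_mul 2).exp
      refine this.congr_deriv ?_
      simp; ring
    have h2 := (hasDerivAt_pow (m + 1) x).mul (h1.const_mul 4)
    refine h2.congr_deriv ?_
    simp only [Nat.add_sub_cancel]
    push_cast
    ring
  · have h1 := ((tendsto_pow_mul_exp (m + 1)).comp tendsto_neg_atBot_atTop).const_mul
      (4 * (-1) ^ (m + 1))
    rw [mul_zero] at h1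
    refine h1.congr fun x => ?_
    simp only [Function.comp]
    rw [neg_pow x (m + 1)]
    have : ((-1 : ℝ) ^ (m + 1)) * (-1) ^ (m + 1) = 1 := by rw [← mul_pow]; simp
    rw [show -2 * -x = 2 * x by ring]
    linear_combination (4 * x ^ (m + 1) * Real.exp (2 * x)) * this

lemma piece_two (m : ℕ) :
    IntegrableOn (fun x : ℝ => (2 * x ^ (m + 1) + ((m : ℝ) + 1) * x ^ m)
      * (-(4 * Real.exp (2 * x)) + 2 + 4 * (x + Real.log 2))) (Ioc (-Real.log 2) 0) ∧
    ∫ x in Ioc (-Real.log 2) 0, (2 * x ^ (m + 1) + ((m : ℝ) + 1) * x ^ m)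
      * (-(4 * Real.exp (2 * x)) + 2 + 4 * (x + Real.log 2))
      = - (-Real.log 2) ^ (m + 1) +
        8 * ((-Real.log 2) ^ (m + 3) / (((m : ℝ) + 2) * ((m : ℝ) + 3))) := by
  have hL := Real.log_pos one_lt_two
  have hc : Continuous (fun x : ℝ => (2 * x ^ (m + 1) + ((m : ℝ) + 1) * x ^ m)
      * (-(4 * Real.exp (2 * x)) + 2 + 4 * (x + Real.log 2))) := by fun_prop
  refine ⟨(hc.integrableOn_Icc).mono_set Ioc_subset_Icc_self, ?_⟩
  rw [← intervalIntegral.integral_of_le (by linarith)]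
  rw [intervalIntegral.integral_eq_sub_of_hasDerivAt (f := fun x =>
      x ^ (m + 1) * (-(4 * Real.exp (2 * x)) + 2 + 4 * (x + Real.log 2))
      + 8 * (x ^ (m + 3) / ((m : ℝ) + 3) + Real.log 2 * x ^ (m + 2) / ((m : ℝ) + 2)))
      _ (hc.intervalIntegrable _ _)]
  · have : Real.exp (2 * -Real.log 2) = 1 / 4 := by
      rw [show 2 * -Real.log 2 = -(Real.log 2 + Real.log 2) by ring, Real.exp_neg, Real.exp_add,
        Real.exp_log two_pos]
      norm_num
    simp only [this]
    have h2 : (m : ℝ) + 2 ≠ 0 := by positivity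
    have h3 : (m : ℝ) + 3 ≠ 0 := by positivity
    rw [zero_pow (by omega), zero_pow (by omega), zero_pow (by omega)]
    have e2 : (-Real.log 2) ^ (m + 2) = (-Real.log 2) ^ (m + 1) * (-Real.log 2) := pow_succ _ _
    have e3 : (-Real.log 2) ^ (m + 3) = (-Real.log 2) ^ (m + 1) * (-Real.log 2) * (-Real.log 2) := by
      rw [← e2, ← pow_succ]
    rw [e2, e3]
    generalize (-Real.log 2) ^ (m + 1) = A
    field_simp
    ring
  · intro x _
    have h1 : HasDerivAt (fun x : ℝ => Real.exp (2 * x)) (2 * Real.exp (2 * x)) x := by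
      have := ((hasDerivAt_id x).const_mul 2).exp
      refine this.congr_deriv ?_
      simp; ring
    have h2 := (((h1.const_mul 4).neg).add_const 2).add
      (((hasDerivAt_id x).add_const (Real.log 2)).const_mul 4)
    have h3 := ((hasDerivAt_pow (m + 1) x).mul h2).add
      ((((hasDerivAt_pow (m + 3) x).div_const ((m : ℝ) + 3)).add
        (((hasDerivAt_pow (m + 2) x).const_mul (Real.log 2)).div_const ((m : ℝ) + 2))).const_mul 8)
    refine h3.congr_deriv ?_
    have h2 : (m : ℝ) + 2 ≠ 0 := by positivity
    have h3 : (m : ℝ) + 3 ≠ 0 := by positivity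
    simp only [Nat.add_sub_cancel, Pi.add_apply, Pi.neg_apply, id, show m + 3 - 1 = m + 2 by omega,
      show m + 2 - 1 = m + 1 by omega]
    push_cast
    field_simp
    ring

noncomputable def E3 (x : ℝ) : ℝ := 2 - 4 / (1 + rr x) + 4 * hh x

lemma continuous_E3 : Continuous E3 := by
  unfold E3
  have h1 := continuous_rr
  have h2 := continuous_hh
  refine (continuous_const.sub (continuous_const.div (by fun_prop) ?_)).add (by fun_prop)
  intro x
  have := rr_nonneg x
  positivity

lemma abs_E3_le {x : ℝ} (hx : 0 ≤ x) : |E3 x| ≤ 4 * Real.exp (-2 * x) := by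
  have h0 := rr_nonneg x
  have h1 := one_sub_rr_le hx
  have h2 := hh_le hx
  have h3 := hh_nonneg x
  have h4 := rr_le_one x
  have e : 2 - 4 / (1 + rr x) = - (2 * ((1 - rr x) / (1 + rr x))) := by
    field_simp; ring
  have e1 : 0 ≤ (1 - rr x) / (1 + rr x) := div_nonneg (by linarith) (by linarith)
  have e2 : (1 - rr x) / (1 + rr x) ≤ 1 - rr x := div_le_self (by linarith) (by linarith)
  unfold E3
  rw [e, abs_le]
  constructor <;> linarith

lemma hasDerivAt_E3 {x : ℝ} (hx : 0 < x) :
    HasDerivAt E3 (2 * E3 x - 8 * hh x) x := by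
  have hr := rr_pos hx
  have h1 := (((hasDerivAt_const x (4:ℝ)).div ((hasDerivAt_rr hx).const_add 1)
    (by positivity)).const_sub 2).add ((hasDerivAt_hh hx).const_mul 4)
  refine h1.congr_deriv ?_
  have e2 : Real.exp (-2 * x) = 1 - rr x ^ 2 := by rw [rr_sq hx.le]; ring
  rw [E3, e2, KK_eq hx]
  field_simp
  ring

lemma piece_three (m : ℕ) :
    IntegrableOn (fun x : ℝ => (2 * x ^ (m + 1) + ((m : ℝ) + 1) * x ^ m) * E3 x) (Ioi 0) ∧
    ∫ x in Ioi (0:ℝ), (2 * x ^ (m + 1) + ((m : ℝ) + 1) * x ^ m) * E3 x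
      = 8 / ((m : ℝ) + 2) * ∫ x in Ioi (0:ℝ), x ^ (m + 2) * KK x := by
  have hcE := continuous_E3
  have hch := continuous_hh
  have hi : IntegrableOn (fun x : ℝ => (2 * x ^ (m + 1) + ((m : ℝ) + 1) * x ^ m) * E3 x)
      (Ioi 0) := by
    have h1 := (integrableOn_pow_mul_exp (m + 1)).const_mul 8
    have h2 := (integrableOn_pow_mul_exp m).const_mul (4 * ((m : ℝ) + 1))
    refine (h1.add h2).mono' ?_ ?_
    · exact (by fun_prop : Continuous fun x : ℝ =>
        (2 * x ^ (m + 1) + ((m : ℝ) + 1) * x ^ m) * E3 x).aestronglyMeasurable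
    · filter_upwards [ae_restrict_mem measurableSet_Ioi] with x hx
      have hx : 0 < x := hx
      rw [norm_mul, Real.norm_of_nonneg (by positivity), Real.norm_eq_abs]
      calc _ ≤ (2 * x ^ (m + 1) + ((m : ℝ) + 1) * x ^ m) * (4 * Real.exp (-2 * x)) := by
            gcongr; exact abs_E3_le hx.le
        _ = _ := by simp only [Pi.add_apply]; ring
  refine ⟨hi, ?_⟩
  have hK := (integrableOn_pow_mul_KK (m + 2)).const_mul (8 / ((m : ℝ) + 2))
  have key := integral_Ioi_of_hasDerivAt_of_tendsto (a := 0) (m := 0)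
    (f := fun x => x ^ (m + 1) * E3 x + 8 / ((m : ℝ) + 2) * (x ^ (m + 2) * hh x)) ?_ ?_
    (hi.sub hK) ?_
  · simp only [Pi.sub_apply] at key
    rw [integral_sub hi hK, integral_const_mul] at key
    rw [zero_pow (by omega), zero_pow (by omega)] at key
    linarith
  · exact (by fun_prop : Continuous _).continuousWithinAt
  · intro x hx
    have h := ((hasDerivAt_pow (m + 1) x).mul (hasDerivAt_E3 hx)).add
      (((hasDerivAt_pow (m + 2) x).mul (hasDerivAt_hh hx)).const_mul (8 / ((m : ℝ) + 2)))
    refine h.congr_deriv ?_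
    have h2 : (m : ℝ) + 2 ≠ 0 := by positivity
    simp only [Nat.add_sub_cancel, Pi.sub_apply, show m + 2 - 1 = m + 1 by omega]
    push_cast
    field_simp
    ring
  · have h1 : Tendsto (fun x => x ^ (m + 1) * E3 x) atTop (𝓝 0) := by
      have h4 := (tendsto_pow_mul_exp (m + 1)).const_mul 4
      rw [mul_zero] at h4
      apply squeeze_zero_norm' _ h4
      filter_upwards [eventually_gt_atTop 0] with x hx
      rw [norm_mul, Real.norm_of_nonneg (by positivity), Real.norm_eq_abs]
      calc _ ≤ x ^ (m + 1) * (4 * Real.exp (-2 * x)) := by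
            gcongr; exact abs_E3_le hx.le
        _ = _ := by ring
    have h2 := h1.add ((tendsto_pow_mul_hh (m + 2)).const_mul (8 / ((m : ℝ) + 2)))
    simpa using h2

lemma exp_shift (x : ℝ) : Real.exp (2 * (x + Real.log 2)) = 4 * Real.exp (2 * x) := by
  rw [show 2 * (x + Real.log 2) = Real.log 2 + Real.log 2 + 2 * x by ring, Real.exp_add,
    Real.exp_add, Real.exp_log two_pos]
  norm_num

lemma eta_three {x : ℝ} (hx : 0 < x) :
    etaLog (x + Real.log 2) = 6 / Real.pi ^ 2 * E3 x := by
  have hL := Real.log_pos one_lt_two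
  have hr := rr_pos hx
  unfold etaLog
  rw [if_neg (by linarith), if_neg (by linarith), exp_shift]
  have e0 : Real.exp (-2 * (x + Real.log 2)) = Real.exp (-2 * x) / 4 := by
    rw [show -2 * (x + Real.log 2) = -(2 * (x + Real.log 2)) by ring, Real.exp_neg, exp_shift,
      show -2 * x = -(2 * x) by ring, Real.exp_neg]
    field_simp
  have e1 : √(1 / 4 - Real.exp (-2 * (x + Real.log 2))) = rr x / 2 := by
    rw [e0, show (1:ℝ) / 4 - Real.exp (-2 * x) / 4 = (rr x / 2) ^ 2 by
      rw [div_pow, rr_sq hx.le]; ring]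
    exact Real.sqrt_sq (by positivity)
  rw [e1, E3, hh, show 1 / 2 + rr x / 2 = (1 + rr x) / 2 by ring]
  have e3 : Real.exp (2 * x) * (1 - rr x ^ 2) = 1 := by
    rw [rr_sq hx.le, sub_sub_cancel, ← Real.exp_add]
    simp
  have e4 : 4 / (1 + rr x) = 4 * Real.exp (2 * x) * (1 - rr x) := by
    rw [div_eq_iff (by positivity)]
    linear_combination (-4) * e3
  rw [e4]
  ring

lemma eta_two {x : ℝ} (h1 : -Real.log 2 < x) (h2 : x ≤ 0) :
    etaLog (x + Real.log 2) =
      6 / Real.pi ^ 2 * (-(4 * Real.exp (2 * x)) + 2 + 4 * (x + Real.log 2)) := by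
  unfold etaLog
  rw [if_neg (by linarith), if_pos (by linarith), exp_shift]

lemma eta_one {x : ℝ} (h1 : x ≤ -Real.log 2) :
    etaLog (x + Real.log 2) = 6 / Real.pi ^ 2 * (4 * Real.exp (2 * x)) := by
  unfold etaLog
  rw [if_pos (by linarith), exp_shift]

theorem rho_formula (n : ℕ) (hn : 1 ≤ n) :
    (∫ s : ℝ, (2 * (s - Real.log 2) ^ n + (n : ℝ) * (s - Real.log 2) ^ (n - 1)) * etaLog s) =
      24 / Real.pi ^ 2 *
        ((n.factorial : ℝ) * (-1) ^ (n + 1) * b (n + 1) / 2 ^ (n + 1)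
          + 2 * (-Real.log 2) ^ (n + 2) / (((n : ℝ) + 2) * ((n : ℝ) + 1))) := by
  obtain ⟨m, rfl⟩ : ∃ m, n = m + 1 := ⟨n - 1, by omega⟩
  have hL := Real.log_pos one_lt_two
  rw [← integral_add_right_eq_self _ (Real.log 2)]
  simp only [add_sub_cancel_right]
  push_cast
  set c : ℝ := 6 / Real.pi ^ 2 with hc
  obtain ⟨i1, v1⟩ := piece_one m
  obtain ⟨i2, v2⟩ := piece_two m
  obtain ⟨i3, v3⟩ := piece_three m
  have q1 : EqOn (fun x : ℝ => c * ((2 * x ^ (m + 1) + ((m : ℝ) + 1) * x ^ m) *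
      (4 * Real.exp (2 * x)))) (fun x : ℝ => (2 * x ^ (m + 1) + ((m : ℝ) + 1) * x ^ m) *
      etaLog (x + Real.log 2)) (Iic (-Real.log 2)) := by
    intro x hx
    simp only
    rw [eta_one hx]; ring
  have q2 : EqOn (fun x : ℝ => c * ((2 * x ^ (m + 1) + ((m : ℝ) + 1) * x ^ m) *
      (-(4 * Real.exp (2 * x)) + 2 + 4 * (x + Real.log 2))))
      (fun x : ℝ => (2 * x ^ (m + 1) + ((m : ℝ) + 1) * x ^ m) *
      etaLog (x + Real.log 2)) (Ioc (-Real.log 2) 0) := by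
    intro x hx
    simp only
    rw [eta_two hx.1 hx.2]; ring
  have q3 : EqOn (fun x : ℝ => c * ((2 * x ^ (m + 1) + ((m : ℝ) + 1) * x ^ m) * E3 x))
      (fun x : ℝ => (2 * x ^ (m + 1) + ((m : ℝ) + 1) * x ^ m) *
      etaLog (x + Real.log 2)) (Ioi 0) := by
    intro x hx
    simp only
    rw [eta_three hx]; ring
  have j1 := IntegrableOn.congr_fun (i1.const_mul c) q1 measurableSet_Iic
  have j2 := IntegrableOn.congr_fun (i2.const_mul c) q2 measurableSet_Ioc
  have j3 := IntegrableOn.congr_fun (i3.const_mul c) q3 measurableSet_Ioi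
  have hu : Iic (-Real.log 2) ∪ Ioc (-Real.log 2) 0 = Iic 0 :=
    Iic_union_Ioc_eq_Iic (by linarith)
  have j12 := j1.union j2
  rw [hu] at j12
  rw [← intervalIntegral.integral_Iic_add_Ioi j12 j3, ← hu,
    setIntegral_union (Iic_disjoint_Ioc le_rfl) measurableSet_Ioc j1 j2,
    ← setIntegral_congr_fun measurableSet_Iic q1, ← setIntegral_congr_fun measurableSet_Ioc q2,
    ← setIntegral_congr_fun measurableSet_Ioi q3, integral_const_mul, integral_const_mul,
    integral_const_mul, v1, v2, v3, b_eq, hc, show m + 1 + 1 = m + 2 from rfl,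
    show m + 1 + 2 = m + 3 from rfl]
  generalize (∫ x in Ioi (0:ℝ), x ^ (m + 2) * KK x) = J
  have hf : ((m + 2).factorial : ℝ) = ((m : ℝ) + 2) * ((m + 1).factorial : ℝ) := by
    rw [Nat.factorial_succ]; push_cast; ring
  have hf0 : ((m + 1).factorial : ℝ) ≠ 0 := by positivity
  have h2 : (m : ℝ) + 2 ≠ 0 := by positivity
  have h3 : (m : ℝ) + 3 ≠ 0 := by positivity
  have hp : (-2 : ℝ) ^ (m + 2) = (-1) ^ (m + 2) * 2 ^ (m + 2) := by rw [← mul_pow]; norm_num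
  have hs : (-1 : ℝ) ^ (m + 2) * (-1) ^ (m + 2) = 1 := by rw [← mul_pow]; simp
  have hb : ((m + 1).factorial : ℝ) * (-1) ^ (m + 2) * (1 / ((m + 2).factorial : ℝ) *
      (2 * (-2) ^ (m + 2) * J)) / 2 ^ (m + 2) = 2 * J / ((m : ℝ) + 2) := by
    rw [hf, hp]
    have h22 : (2 : ℝ) ^ (m + 2) ≠ 0 := by positivity
    generalize (2 : ℝ) ^ (m + 2) = T at *
    generalize (-1 : ℝ) ^ (m + 2) = S at *
    field_simp
    linear_combination J * hs
  rw [hb, show (m : ℝ) + 1 + 2 = m + 3 by ring, show (m : ℝ) + 1 + 1 = m + 2 by ring]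
  field_simp
  ring
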